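/- arXiv:1101.1936 — 2 statements merged into one kernel-verified Lean document; each statement's English description precedes it below -/
import Mathlib

section
/- Let R be a right artinian ring and M, N finitely generated right R-modules. Then φ(N ⊕ M) ≥ φ(M). -/
open Module Function

universe u

variable (R : Type u) [Ring R]

/-- A finitely generated right `R`-module, encoded as a module over `Rᵐᵒᵖ`. -/
structure FGMod where
  carrier : Type u
  [isAddCommGroup : AddCommGroup carrier]
  [isModule : Module Rᵐᵒᵖ carrier]
  [isFinite : Module.Finite Rᵐᵒᵖ carrier]

attribute [instance] FGMod.isAddCommGroup FGMod.isModule FGMod.isFinite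

instance : CoeSort (FGMod R) (Type u) := ⟨FGMod.carrier⟩

variable {R}

/-- Isomorphism of f.g. right modules. -/
def FGMod.Iso (M N : FGMod R) : Prop := Nonempty (M ≃ₗ[Rᵐᵒᵖ] N)

/-- Direct sum. -/
def FGMod.prod (M N : FGMod R) : FGMod R := ⟨M × N⟩

/-- `M^k`, the direct sum of `k` copies of `M`. -/
def FGMod.pow (M : FGMod R) (k : ℕ) : FGMod R := ⟨Fin k → M⟩

/-- `N` is (isomorphic to) a direct summand of `M`. -/
def FGMod.IsSummand (N M : FGMod R) : Prop :=
  ∃ A B : Submodule Rᵐᵒᵖ M, IsCompl A B ∧ Nonempty (N ≃ₗ[Rᵐᵒᵖ] A)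

/-- `M` is indecomposable. -/
def FGMod.Indec (M : FGMod R) : Prop :=
  Nontrivial M ∧ ∀ A B : Submodule Rᵐᵒᵖ M, IsCompl A B → A = ⊥ ∨ B = ⊥

/-- `M` is projective. -/
def FGMod.Proj (M : FGMod R) : Prop := Module.Projective Rᵐᵒᵖ M

/-- `f : P → M` is a projective cover: `P` projective, `f` surjective with superfluous kernel. -/
def IsProjCover (M P : FGMod R) (f : P →ₗ[Rᵐᵒᵖ] M) : Prop :=
  P.Proj ∧ Surjective f ∧ ∀ N : Submodule Rᵐᵒᵖ P, N ⊔ LinearMap.ker f = ⊤ → N = ⊤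

/-- `N` is a (first) syzygy of `M`: the kernel of a projective cover of `M`. -/
def IsSyzygy (M N : FGMod R) : Prop :=
  ∃ (P : FGMod R) (f : P →ₗ[Rᵐᵒᵖ] M),
    IsProjCover M P f ∧ Nonempty (N ≃ₗ[Rᵐᵒᵖ] LinearMap.ker f)

/-- `N` is an `n`-th syzygy of `M`. -/
def IsSyzygyN : ℕ → FGMod R → FGMod R → Prop
  | 0, M, N => M.Iso N
  | n+1, M, N => ∃ L, IsSyzygy M L ∧ IsSyzygyN n L N

/-- `M` has projective dimension at most `n`. -/
def HasPdLE : ℕ → FGMod R → Prop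
  | 0, M => M.Proj
  | n+1, M => M.Proj ∨ ∃ N, IsSyzygy M N ∧ HasPdLE n N

/-- `M` has finite projective dimension. -/
def FinPd (M : FGMod R) : Prop := ∃ n, HasPdLE n M

/-- The projective dimension of `M` (junk value if infinite). -/
noncomputable def pdIT (M : FGMod R) : ℕ := sInf {n | HasPdLE n M}

variable (R)

/-- The Igusa–Todorov relations in the free abelian group on f.g. right modules:
`[A] - [B] - [C]` whenever `A ≅ B ⊕ C`, and `[P]` for `P` projective. -/
def ITRel : Set (FreeAbelianGroup (FGMod R)) :=
  {x | ∃ A B C : FGMod R, Nonempty (A ≃ₗ[Rᵐᵒᵖ] (B × C : Type u)) ∧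
        x = FreeAbelianGroup.of A - FreeAbelianGroup.of B - FreeAbelianGroup.of C} ∪
  {x | ∃ P : FGMod R, P.Proj ∧ x = FreeAbelianGroup.of P}

/-- The Igusa–Todorov group `K`. -/
def ITK := FreeAbelianGroup (FGMod R) ⧸ AddSubgroup.closure (ITRel R)

noncomputable instance : AddCommGroup (ITK R) :=
  QuotientAddGroup.Quotient.addCommGroup _

/-- The class `[M]` in `K`. -/
noncomputable def ITcls (M : FGMod R) : ITK R := QuotientAddGroup.mk (FreeAbelianGroup.of M)

/-- `⟨M⟩`: the subgroup of `K` generated by the indecomposable non-projective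
direct summands of `M`. -/
noncomputable def ITgen (M : FGMod R) : AddSubgroup (ITK R) :=
  AddSubgroup.closure
    {x | ∃ N : FGMod R, N.IsSummand M ∧ N.Indec ∧ ¬N.Proj ∧ x = ITcls R N}

/-- The rank of a subgroup of `K`. -/
noncomputable def rkIT (H : AddSubgroup (ITK R)) : ℕ :=
  Module.finrank ℤ (AddSubgroup.toIntSubmodule H)

/-- `OmK` is a syzygy endomorphism of `K`: a group endomorphism sending `[M]` to `[ΩM]`. -/
def IsSyzygyEnd (OmK : AddMonoid.End (ITK R)) : Prop :=
  ∀ M N : FGMod R, IsSyzygy M N → OmK (ITcls R M) = ITcls R N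

/-- The Igusa–Todorov function `φ`: the least `n` such that the rank of
`Ω^i⟨M⟩` equals that of `Ω^n⟨M⟩` for all `i ≥ n`. -/
noncomputable def phiIT (OmK : AddMonoid.End (ITK R)) (M : FGMod R) : ℕ :=
  sInf {n | ∀ i, n ≤ i →
    rkIT R ((ITgen R M).map ((OmK ^ i : AddMonoid.End (ITK R)) : ITK R →+ ITK R))
      = rkIT R ((ITgen R M).map ((OmK ^ n : AddMonoid.End (ITK R)) : ITK R →+ ITK R))}

/-- The second Igusa–Todorov function `ψ`. -/
noncomputable def psiIT (OmK : AddMonoid.End (ITK R)) (M : FGMod R) : ℕ :=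
  phiIT R OmK M + sSup {d | ∃ N X : FGMod R, IsSyzygyN (phiIT R OmK M) M N ∧
      X.IsSummand N ∧ FinPd X ∧ d = pdIT X}

/-- The socle of a module: the sum of its simple submodules. -/
def socleIT (M : FGMod R) : Submodule Rᵐᵒᵖ M :=
  sSup {S : Submodule Rᵐᵒᵖ M | IsSimpleModule Rᵐᵒᵖ S}

/-!
By Fitting's lemma an indecomposable module of finite length has a local endomorphism ring, so an
indecomposable retract of `A ⊕ B` is a retract of `A` or of `B`. Splitting a finite length module
into smaller pieces therefore shows that it has only finitely many indecomposable summands up to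
isomorphism; hence `⟨M⟩` is finitely generated, and `⟨M⟩ ≤ ⟨L⟩` when `M` is a summand of `L`.

Suppose the rank of `Ωⁱ⟨L⟩` is constant for `i ≥ n`. By rank-nullity, the kernel of each power of
`Ω` meets `Ωⁿ⟨L⟩`, and a fortiori `Ωⁿ⟨M⟩`, in a group of rank zero, so the rank of `Ωⁱ⟨M⟩` is
constant for `i ≥ n` too.
-/

section Retract

variable {S : Type*} [Ring S] {X L M N : Type*} [AddCommGroup X] [Module S X]
  [AddCommGroup L] [Module S L] [AddCommGroup M] [Module S M] [AddCommGroup N] [Module S N]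

variable (S X M) in
/-- `X` is a retract of the `S`-module `M`. This encodes "`X` is isomorphic to a direct summand
of `M`" by maps instead of complements, so that it composes. -/
def IsLinearRetract : Prop :=
  ∃ (i : X →ₗ[S] M) (p : M →ₗ[S] X), p ∘ₗ i = LinearMap.id

theorem isCompl_range_ker_of_comp_eq_id {i : X →ₗ[S] M} {p : M →ₗ[S] X}
    (h : p ∘ₗ i = LinearMap.id) : IsCompl (LinearMap.range i) (LinearMap.ker p) := by
  have idempotent : IsIdempotentElem (i ∘ₗ p : Module.End S M) := by
    rw [IsIdempotentElem, Module.End.mul_eq_comp, LinearMap.comp_assoc, ← p.comp_assoc, h,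
      LinearMap.id_comp]
  have range_eq : LinearMap.range (i ∘ₗ p) = LinearMap.range i :=
    LinearMap.range_comp_of_range_eq_top i
      (LinearMap.range_eq_top.2 (LinearMap.surjective_of_comp_eq_id i p h))
  have ker_eq : LinearMap.ker (i ∘ₗ p) = LinearMap.ker p :=
    LinearMap.ker_comp_of_ker_eq_bot p
      (LinearMap.ker_eq_bot.2 (LinearMap.injective_of_comp_eq_id i p h))
  rw [← range_eq, ← ker_eq]
  exact LinearMap.IsIdempotentElem.isCompl idempotent

theorem isLinearRetract_of_linearEquiv (e : X ≃ₗ[S] M) : IsLinearRetract S X M :=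
  ⟨e, e.symm, e.symm_comp⟩

theorem isLinearRetract_prod_right : IsLinearRetract S M (N × M) :=
  ⟨LinearMap.inr S N M, LinearMap.snd S N M, LinearMap.snd_comp_inr S N M⟩

theorem IsLinearRetract.trans (hXM : IsLinearRetract S X M) (hML : IsLinearRetract S M L) :
    IsLinearRetract S X L := by
  obtain ⟨i, p, hpi⟩ := hXM
  obtain ⟨j, q, hqj⟩ := hML
  refine ⟨j ∘ₗ i, p ∘ₗ q, ?_⟩
  rw [LinearMap.comp_assoc, ← LinearMap.comp_assoc i j q, hqj, LinearMap.id_comp, hpi]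

theorem isLinearRetract_iff_exists_isCompl :
    IsLinearRetract S X M ↔ ∃ A B : Submodule S M, IsCompl A B ∧ Nonempty (X ≃ₗ[S] A) := by
  constructor
  · rintro ⟨i, p, h⟩
    exact ⟨_, _, isCompl_range_ker_of_comp_eq_id h,
      ⟨LinearEquiv.ofInjective i (LinearMap.injective_of_comp_eq_id i p h)⟩⟩
  · rintro ⟨A, B, hAB, ⟨e⟩⟩
    exact (isLinearRetract_of_linearEquiv e).trans
      ⟨A.subtype, A.projectionOnto B hAB, A.projectionOnto_comp_subtype hAB⟩

theorem isLinearRetract_of_isUnit_comp (i : X →ₗ[S] M) (p : M →ₗ[S] X)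
    (h : IsUnit (p ∘ₗ i : Module.End S X)) : IsLinearRetract S X M := by
  obtain ⟨v, hv⟩ := h.exists_left_inv
  exact ⟨i, v ∘ₗ p, hv⟩

/-- The two coordinates of `X → M × N → X` are endomorphisms of `X` with sum `1`. -/
theorem IsLinearRetract.left_or_right_of_prod [IsLocalRing (Module.End S X)]
    (h : IsLinearRetract S X (M × N)) : IsLinearRetract S X M ∨ IsLinearRetract S X N := by
  obtain ⟨i, p, hpi⟩ := h
  have sum_eq_one :
      ((p ∘ₗ LinearMap.inl S M N) ∘ₗ (LinearMap.fst S M N ∘ₗ i) : Module.End S X) +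
        (p ∘ₗ LinearMap.inr S M N) ∘ₗ (LinearMap.snd S M N ∘ₗ i) = 1 := by
    ext x
    simpa [← map_add] using LinearMap.congr_fun hpi x
  exact (IsLocalRing.isUnit_or_isUnit_of_add_one sum_eq_one).imp
    (isLinearRetract_of_isUnit_comp _ _) (isLinearRetract_of_isUnit_comp _ _)

end Retract

section Indecomposable

variable {S : Type*} [Ring S] {X M : Type*} [AddCommGroup X] [Module S X]
  [AddCommGroup M] [Module S M]

variable (S M) in
/-- An indecomposable module over an arbitrary ring; `FGMod.Indec` is the case of finitely
generated right modules. -/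
def IsIndecomposableModule : Prop :=
  Nontrivial M ∧ ∀ A B : Submodule S M, IsCompl A B → A = ⊥ ∨ B = ⊥

/-- Fitting's lemma: every endomorphism is nilpotent or invertible. -/
theorem IsIndecomposableModule.isLocalRing_end [IsArtinian S X] [IsNoetherian S X]
    (hX : IsIndecomposableModule S X) : IsLocalRing (Module.End S X) := by
  have := hX.1
  have isNilpotent_or_isUnit (f : Module.End S X) : IsNilpotent f ∨ IsUnit f := by
    obtain ⟨n, hn, n_pos⟩ :=
      (f.eventually_isCompl_ker_pow_range_pow.and (Filter.eventually_gt_atTop 0)).exists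
    rcases hX.2 _ _ hn with ker_eq | range_eq
    · have range_eq : LinearMap.range (f ^ n) = ⊤ := by simpa [ker_eq] using hn.codisjoint
      have : IsUnit (f ^ n) := (Module.End.isUnit_iff _).2
        ⟨LinearMap.ker_eq_bot.1 ker_eq, LinearMap.range_eq_top.1 range_eq⟩
      exact .inr ((isUnit_pow_iff n_pos.ne').1 this)
    · exact .inl ⟨n, LinearMap.range_eq_bot.1 range_eq⟩
  refine ⟨fun {f g} hfg => (isNilpotent_or_isUnit f).symm.imp_right fun hf => ?_⟩
  rw [eq_sub_of_add_eq' hfg]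
  exact hf.isUnit_one_sub

theorem IsLinearRetract.isLocalRing_end [IsArtinian S M] [IsNoetherian S M]
    (h : IsLinearRetract S X M) (hX : IsIndecomposableModule S X) :
    IsLocalRing (Module.End S X) := by
  obtain ⟨i, p, hpi⟩ := h
  have i_injective := LinearMap.injective_of_comp_eq_id i p hpi
  have := isArtinian_of_injective i i_injective
  have := isNoetherian_of_injective i i_injective
  exact hX.isLocalRing_end

theorem IsLinearRetract.nonempty_linearEquiv [Nontrivial X] (h : IsLinearRetract S X M)
    (hM : IsIndecomposableModule S M) : Nonempty (X ≃ₗ[S] M) := by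
  obtain ⟨i, p, hpi⟩ := h
  have i_injective := LinearMap.injective_of_comp_eq_id i p hpi
  rcases hM.2 _ _ (isCompl_range_ker_of_comp_eq_id hpi) with range_eq | ker_eq
  · obtain ⟨x, hx⟩ := exists_ne (0 : X)
    exact (hx (i_injective (by simp [LinearMap.range_eq_bot.1 range_eq]))).elim
  · exact ⟨(LinearEquiv.ofBijective p ⟨LinearMap.ker_eq_bot.1 ker_eq,
      LinearMap.surjective_of_comp_eq_id i p hpi⟩).symm⟩

theorem exists_isCompl_lt_top_of_not_isIndecomposableModule [Nontrivial M]
    (h : ¬IsIndecomposableModule S M) :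
    ∃ A B : Submodule S M, IsCompl A B ∧ A < ⊤ ∧ B < ⊤ := by
  simp only [IsIndecomposableModule, not_and, not_forall, not_or] at h
  obtain ⟨A, B, hAB, hA, hB⟩ := h ‹_›
  refine ⟨A, B, hAB, lt_top_iff_ne_top.2 ?_, lt_top_iff_ne_top.2 ?_⟩
  · rintro rfl
    exact hB (by simpa using hAB.disjoint)
  · rintro rfl
    exact hA (by simpa using hAB.disjoint)

universe w

theorem exists_finite_representatives_indecomposable_retracts [IsArtinian S M] [IsNoetherian S M]
    (N : Submodule S M) :
    ∃ F : Set (Submodule S M), F.Finite ∧ ∀ (X : Type w) [AddCommGroup X] [Module S X],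
      IsIndecomposableModule S X → IsLinearRetract S X N → ∃ A ∈ F, Nonempty (X ≃ₗ[S] A) := by
  induction N using WellFoundedLT.induction with
  | ind N ih =>
    rcases subsingleton_or_nontrivial N with _ | _
    · refine ⟨∅, Set.finite_empty, fun X _ _ hX ⟨i, p, hpi⟩ => ?_⟩
      have := hX.1
      exact (not_subsingleton X (LinearMap.injective_of_comp_eq_id i p hpi).subsingleton).elim
    by_cases hN : IsIndecomposableModule S N
    · refine ⟨{N}, Set.finite_singleton N, fun X _ _ hX hXN => ⟨N, rfl, ?_⟩⟩
      have := hX.1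
      exact hXN.nonempty_linearEquiv hN
    obtain ⟨A, B, hAB, hA, hB⟩ := exists_isCompl_lt_top_of_not_isIndecomposableModule hN
    have map_lt (C : Submodule S N) (hC : C < ⊤) : C.map N.subtype < N := by
      simpa using Submodule.map_strictMono_of_injective N.subtype_injective hC
    obtain ⟨F, F_finite, hF⟩ := ih _ (map_lt A hA)
    obtain ⟨G, G_finite, hG⟩ := ih _ (map_lt B hB)
    refine ⟨F ∪ G, F_finite.union G_finite, fun X _ _ hX hXN => ?_⟩
    have := hXN.isLocalRing_end hX
    have splitting := isLinearRetract_of_linearEquiv (A.prodEquivOfIsCompl B hAB).symm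
    rcases (hXN.trans splitting).left_or_right_of_prod with h | h
    · obtain ⟨C, hC, e⟩ := hF X hX (h.trans (isLinearRetract_of_linearEquiv (N.equivSubtypeMap A)))
      exact ⟨C, .inl hC, e⟩
    · obtain ⟨C, hC, e⟩ := hG X hX (h.trans (isLinearRetract_of_linearEquiv (N.equivSubtypeMap B)))
      exact ⟨C, .inr hC, e⟩

end Indecomposable

section RankStabilization

universe w

variable {S : Type*} [Ring S] {K K' : Type w} [AddCommGroup K] [Module S K]
  [AddCommGroup K'] [Module S K']

/-- The least `n` such that `f ^ i (H)` and `f ^ n (H)` have the same rank for all `i ≥ n`, which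
turns `H = ⟨M⟩` and `f = Ω` into `φ(M)`. The value is junk (`0`) if there is no such `n`, and
`finrank` is `0` on modules of infinite rank. -/
noncomputable def rankStabilizationIndex (f : Module.End S K) (H : Submodule S K) : ℕ :=
  sInf {n | ∀ i, n ≤ i → finrank S (H.map (f ^ i)) = finrank S (H.map (f ^ n))}

theorem map_pow_add (f : Module.End S K) (H : Submodule S K) (n k : ℕ) :
    H.map (f ^ (n + k)) = (H.map (f ^ n)).map (f ^ k) := by
  rw [← Submodule.map_comp, ← Module.End.mul_eq_comp, ← pow_add, add_comm]

theorem rank_map_add_rank_inf_ker [HasRankNullity.{w} S] (g : K →ₗ[S] K') (A : Submodule S K) :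
    Module.rank S (A.map g) + Module.rank S (A ⊓ LinearMap.ker g : Submodule S K) =
      Module.rank S A := by
  rw [← (g.domRestrict A).rank_range_add_rank_ker, LinearMap.range_domRestrict,
    LinearMap.ker_domRestrict, ← Submodule.map_comap_subtype,
    (A.equivSubtypeMap ((LinearMap.ker g).comap A.subtype)).rank_eq]

variable [StrongRankCondition S]

theorem rankStabilizationIndex_spec (f : Module.End S K) (H : Submodule S K) [Module.Finite S H]
    (k : ℕ) :
    finrank S (H.map (f ^ (rankStabilizationIndex f H + k))) =
      finrank S (H.map (f ^ rankStabilizationIndex f H)) := by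
  have rank_antitone : Antitone fun n => finrank S (H.map (f ^ n)) :=
    antitone_nat_of_succ_le fun n => by
      rw [map_pow_add]
      exact Submodule.finrank_map_le _ _
  obtain ⟨n, hn⟩ := WellFoundedLT.antitone_chain_condition rank_antitone
  exact Nat.sInf_mem (s := {n | ∀ i, n ≤ i → finrank S (H.map (f ^ i)) = finrank S (H.map (f ^ n))})
    ⟨n, fun i hi => (hn i hi).symm⟩ _ (Nat.le_add_right _ k)

variable [HasRankNullity.{w} S]

theorem finrank_map_eq_of_le (g : K →ₗ[S] K') {A B : Submodule S K} [Module.Finite S A]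
    (hBA : B ≤ A) (hA : finrank S (A.map g) = finrank S A) :
    finrank S (B.map g) = finrank S B := by
  have rank_A := rank_map_add_rank_inf_ker g A
  rw [← finrank_eq_rank S (A.map g), ← finrank_eq_rank S A, hA] at rank_A
  have rank_A_inf_ker : Module.rank S (A ⊓ LinearMap.ker g : Submodule S K) = 0 :=
    Cardinal.eq_of_add_eq_add_left (rank_A.trans (add_zero _).symm) Cardinal.natCast_lt_aleph0
  have rank_B_inf_ker : Module.rank S (B ⊓ LinearMap.ker g : Submodule S K) = 0 :=
    le_zero_iff.1 ((Submodule.rank_mono (inf_le_inf_right _ hBA)).trans_eq rank_A_inf_ker)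
  have rank_B := rank_map_add_rank_inf_ker g B
  rw [rank_B_inf_ker, add_zero] at rank_B
  exact congrArg Cardinal.toNat rank_B

theorem rankStabilizationIndex_mono (f : Module.End S K) {H₁ H₂ : Submodule S K}
    [Module.Finite S H₂] (h : H₁ ≤ H₂) :
    rankStabilizationIndex f H₁ ≤ rankStabilizationIndex f H₂ := by
  refine Nat.sInf_le fun i hi => ?_
  obtain ⟨k, rfl⟩ := Nat.exists_eq_add_of_le hi
  have rank_H₂ := rankStabilizationIndex_spec f H₂ k
  rw [map_pow_add] at rank_H₂ ⊢
  exact finrank_map_eq_of_le _ (Submodule.map_mono h) rank_H₂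

end RankStabilization

section IgusaTodorov

variable {R : Type u} [Ring R]

theorem ITcls_eq_zero_of_proj {P : FGMod R} (hP : P.Proj) : ITcls R P = 0 :=
  (QuotientAddGroup.eq_zero_iff _).2 (AddSubgroup.subset_closure (.inr ⟨P, hP, rfl⟩))

theorem ITcls_eq_add {A B C : FGMod R} (e : A ≃ₗ[Rᵐᵒᵖ] (B × C : Type u)) :
    ITcls R A = ITcls R B + ITcls R C := by
  have relation : ITcls R A - ITcls R B - ITcls R C = 0 :=
    (QuotientAddGroup.eq_zero_iff _).2 (AddSubgroup.subset_closure (.inl ⟨A, B, C, ⟨e⟩, rfl⟩))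
  rwa [sub_sub, sub_eq_zero] at relation

theorem ITcls_eq_of_linearEquiv {A B : FGMod R} (e : A ≃ₗ[Rᵐᵒᵖ] B) : ITcls R A = ITcls R B := by
  let zero : FGMod R := ⟨PUnit.{u + 1}⟩
  have zero_proj : zero.Proj := inferInstanceAs (Module.Projective Rᵐᵒᵖ PUnit.{u + 1})
  let prodZeroEquiv : A ≃ₗ[Rᵐᵒᵖ] (B × zero : Type u) :=
    e.trans (LinearEquiv.prodUnique (M₂ := PUnit.{u + 1})).symm
  rw [ITcls_eq_add prodZeroEquiv, ITcls_eq_zero_of_proj zero_proj, add_zero]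

theorem ITgen_fg (M : FGMod R) [IsArtinian Rᵐᵒᵖ M] [IsNoetherian Rᵐᵒᵖ M] :
    (AddSubgroup.toIntSubmodule (ITgen R M)).FG := by
  obtain ⟨F, F_finite, hF⟩ :=
    exists_finite_representatives_indecomposable_retracts.{u} (⊤ : Submodule Rᵐᵒᵖ M)
  rw [Submodule.fg_iff_addSubgroup_fg, AddSubgroup.toIntSubmodule_toAddSubgroup,
    AddSubgroup.fg_iff]
  refine ⟨_, rfl, (F_finite.image fun A : Submodule Rᵐᵒᵖ M => ITcls R ⟨A⟩).subset ?_⟩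
  rintro _ ⟨X, hXM, hX, -, rfl⟩
  have X_retract : IsLinearRetract Rᵐᵒᵖ X (⊤ : Submodule Rᵐᵒᵖ M) :=
    (isLinearRetract_iff_exists_isCompl.2 hXM).trans
      (isLinearRetract_of_linearEquiv Submodule.topEquiv.symm)
  obtain ⟨A, hA, ⟨e⟩⟩ := hF X hX X_retract
  exact ⟨A, hA, (ITcls_eq_of_linearEquiv (B := ⟨A⟩) e).symm⟩

theorem FGMod.isSummand_prod_right (N M : FGMod R) : M.IsSummand (N.prod M) :=
  isLinearRetract_iff_exists_isCompl.1 isLinearRetract_prod_right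

theorem ITgen_mono {M L : FGMod R} (h : M.IsSummand L) : ITgen R M ≤ ITgen R L := by
  refine AddSubgroup.closure_mono ?_
  rintro _ ⟨X, hXM, hX⟩
  have X_retract : IsLinearRetract Rᵐᵒᵖ X L := (isLinearRetract_iff_exists_isCompl.2 hXM).trans
    (isLinearRetract_iff_exists_isCompl.2 h)
  exact ⟨X, isLinearRetract_iff_exists_isCompl.1 X_retract, hX⟩

theorem phiIT_eq_rankStabilizationIndex (OmK : AddMonoid.End (ITK R)) (M : FGMod R) :
    phiIT R OmK M = rankStabilizationIndex (addMonoidEndRingEquivInt (ITK R) OmK)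
      (AddSubgroup.toIntSubmodule (ITgen R M)) := by
  have rkIT_map (n : ℕ) : rkIT R ((ITgen R M).map (OmK ^ n : AddMonoid.End (ITK R))) =
      finrank ℤ ((AddSubgroup.toIntSubmodule (ITgen R M)).map
        (addMonoidEndRingEquivInt (ITK R) OmK ^ n)) := by
    rw [← map_pow]
    rfl
  simp only [phiIT, rankStabilizationIndex, rkIT_map]

theorem phi_le_phi_prod_general (OmK : AddMonoid.End (ITK R)) (_ : IsSyzygyEnd R OmK)
    {M L : FGMod R} [IsArtinian Rᵐᵒᵖ L] [IsNoetherian Rᵐᵒᵖ L] (h : M.IsSummand L) :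
    phiIT R OmK M ≤ phiIT R OmK L := by
  have : Module.Finite ℤ (AddSubgroup.toIntSubmodule (ITgen R L)) :=
    Module.Finite.iff_fg.2 (ITgen_fg L)
  rw [phiIT_eq_rankStabilizationIndex, phiIT_eq_rankStabilizationIndex]
  exact rankStabilizationIndex_mono _ (ITgen_mono h)

end IgusaTodorov

/-- `φ(N ⊕ M) ≥ φ(M)`. -/
theorem phi_le_phi_prod (R : Type u) [Ring R] [IsArtinianRing Rᵐᵒᵖ]
    (OmK : AddMonoid.End (ITK R)) (hOm : IsSyzygyEnd R OmK)
    (M N : FGMod R) :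
    phiIT R OmK M ≤ phiIT R OmK (N.prod M) :=
  phi_le_phi_prod_general OmK hOm (FGMod.isSummand_prod_right N M)
end

section
/- Let R be a right artinian ring and M a finitely generated right R-module of finite projective dimension. Then ψ(M) = pd M, where ψ is the second Igusa–Todorov function. -/
open Module Function

universe u

variable (R : Type u) [Ring R]

variable {R}

variable (R)

/-! A syzygy shifts projective dimension by one and a direct summand does not raise it. So if
`pd M = n < ∞`, every summand `X` of `M` has `pd X ≤ n`, hence `Ω^i [X] = 0` for `i ≥ n`: the ranks
of `Ω^i⟨M⟩` vanish from `n` on, and `φ(M) ≤ n`. Now `Ω^{φ(M)} M` has projective dimension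
`n - φ(M)`, which is the largest among its own summands, and adding `φ(M)` back gives `n`. -/

section SuperfluousEpi

variable {S P Q M : Type*} [Ring S] [AddCommGroup P] [Module S P] [AddCommGroup Q] [Module S Q]
  [AddCommGroup M] [Module S M]

/-- A superfluous epimorphism: a surjective map with superfluous kernel, so that a projective cover
(`IsProjCover`) is a superfluous epimorphism from a projective module. -/
def IsSuperfluousEpi (f : P →ₗ[S] M) : Prop :=
  Surjective f ∧ ∀ N : Submodule S P, N ⊔ LinearMap.ker f = ⊤ → N = ⊤

theorem IsSuperfluousEpi.surjective_of_comp {f : P →ₗ[S] M} (hf : IsSuperfluousEpi f)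
    {g : Q →ₗ[S] P} (hfg : Surjective (f ∘ₗ g)) : Surjective g := by
  rw [← LinearMap.range_eq_top] at hfg ⊢
  apply hf.2
  rw [← LinearMap.map_eq_top_iff (LinearMap.range_eq_top.2 hf.1), ← LinearMap.range_comp, hfg]

theorem IsSuperfluousEpi.projective_of_comp [Module.Projective S P] [IsNoetherian S Q]
    {p : P →ₗ[S] M} {i : Q →ₗ[S] P} (hpi : IsSuperfluousEpi (p ∘ₗ i)) :
    Module.Projective S Q := by
  obtain ⟨g, hg⟩ := Module.projective_lifting_property (p ∘ₗ i) p hpi.1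
  have hgi : Surjective (g ∘ₗ i) := by
    apply hpi.surjective_of_comp
    rw [← LinearMap.comp_assoc, hg]
    exact hpi.1
  let e : Q ≃ₗ[S] Q := LinearEquiv.ofBijective (g ∘ₗ i)
    (IsNoetherian.bijective_of_surjective_endomorphism _ hgi)
  exact Module.Projective.of_split i (e.symm.toLinearMap ∘ₗ g)
    (LinearMap.ext fun x => e.symm_apply_apply x)

theorem exists_isSuperfluousEpi_comp_subtype [IsArtinian S P] {f : P →ₗ[S] M}
    (hf : Surjective f) : ∃ Q : Submodule S P, IsSuperfluousEpi (f ∘ₗ Q.subtype) := by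
  obtain ⟨Q, hQ⟩ := exists_minimal_of_wellFoundedLT (fun Q : Submodule S P => Q.map f = ⊤)
    ⟨⊤, by rw [Submodule.map_top, LinearMap.range_eq_top.2 hf]⟩
  have hrange : LinearMap.range (f ∘ₗ Q.subtype) = ⊤ := by
    rw [LinearMap.range_comp, Submodule.range_subtype, hQ.prop]
  refine ⟨Q, LinearMap.range_eq_top.1 hrange, fun N hN => ?_⟩
  have hmap : (N.map Q.subtype).map f = ⊤ := by
    rw [← Submodule.map_comp, LinearMap.map_eq_top_iff hrange, hN]
  have hNQ : N.map Q.subtype = Q := hQ.eq_of_le hmap (Submodule.map_subtype_le Q N)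
  apply Submodule.map_injective_of_injective Q.injective_subtype
  rw [hNQ, Submodule.map_subtype_top]

end SuperfluousEpi

/-- The syzygy operator is defined on all finitely generated right `R`-modules: each has a
projective cover with finitely generated kernel. Equivalently, `R` is semiperfect and right
noetherian. -/
def HasSyzygies : Prop :=
  ∀ M : FGMod R, ∃ N, IsSyzygy M N

theorem hasSyzygies_of_isArtinianRing [IsArtinianRing Rᵐᵒᵖ] : HasSyzygies R := by
  intro M
  obtain ⟨k, f, hf⟩ := Module.Finite.exists_fin' Rᵐᵒᵖ M
  obtain ⟨Q, hQ⟩ := exists_isSuperfluousEpi_comp_subtype hf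
  exact ⟨⟨LinearMap.ker (f ∘ₗ Q.subtype)⟩, ⟨Q⟩, f ∘ₗ Q.subtype, ⟨hQ.projective_of_comp, hQ⟩,
    ⟨LinearEquiv.refl _ _⟩⟩

section ProjectiveDimension

open CategoryTheory

variable {R} {M N X : FGMod R} {k n : ℕ}

theorem FGMod.proj_iff_hasProjectiveDimensionLE_zero :
    M.Proj ↔ HasProjectiveDimensionLE (ModuleCat.of Rᵐᵒᵖ M) 0 :=
  (IsProjective.iff_projective (R := Rᵐᵒᵖ) M).trans
    (projective_iff_hasProjectiveDimensionLE_zero _)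

theorem IsSyzygy.hasProjectiveDimensionLE_succ_iff (h : IsSyzygy M N) :
    HasProjectiveDimensionLE (ModuleCat.of Rᵐᵒᵖ M) (n + 1) ↔
      HasProjectiveDimensionLE (ModuleCat.of Rᵐᵒᵖ N) n := by
  obtain ⟨P, f, ⟨hP, hf, -⟩, ⟨e⟩⟩ := h
  have hker := (LinearMap.shortExact_shortComplexKer hf).hasProjectiveDimensionLT_X₃_iff n
    ((IsProjective.iff_projective (R := Rᵐᵒᵖ) P).1 hP)
  exact hker.trans ⟨fun _ => hasProjectiveDimensionLT_of_iso e.symm.toModuleIso (n + 1),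
    fun _ => hasProjectiveDimensionLT_of_iso e.toModuleIso (n + 1)⟩

theorem FGMod.IsSummand.nonempty_retract (h : X.IsSummand N) :
    Nonempty (Retract (ModuleCat.of Rᵐᵒᵖ X) (ModuleCat.of Rᵐᵒᵖ N)) := by
  obtain ⟨A, B, hAB, ⟨e⟩⟩ := h
  exact ⟨{
    i := ModuleCat.ofHom (A.subtype ∘ₗ e.toLinearMap)
    r := ModuleCat.ofHom (e.symm.toLinearMap ∘ₗ A.projectionOnto B hAB)
    retract := by ext x; simp }⟩

theorem FGMod.isSummand_refl (M : FGMod R) : M.IsSummand M :=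
  ⟨⊤, ⊥, isCompl_top_bot, ⟨Submodule.topEquiv.symm⟩⟩

theorem HasPdLE.mono {m : ℕ} (h : HasPdLE m M) (hmn : m ≤ n) : HasPdLE n M := by
  induction m generalizing n M with
  | zero =>
    cases n with
    | zero => exact h
    | succ n => exact Or.inl h
  | succ m ih =>
    obtain ⟨n, rfl⟩ := Nat.exists_eq_add_of_le' hmn
    exact h.imp_right fun ⟨L, hML, hL⟩ => ⟨L, hML, ih hL (Nat.le_add_left m n)⟩

theorem FinPd.pdIT_le_iff (hM : FinPd M) : pdIT M ≤ n ↔ HasPdLE n M :=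
  ⟨(show HasPdLE (pdIT M) M from Nat.sInf_mem hM).mono, fun h => Nat.sInf_le h⟩

namespace HasSyzygies

theorem exists_isSyzygyN (hR : HasSyzygies R) (k : ℕ) (M : FGMod R) :
    ∃ N, IsSyzygyN k M N := by
  induction k generalizing M with
  | zero => exact ⟨M, ⟨LinearEquiv.refl _ _⟩⟩
  | succ k ih =>
    obtain ⟨L, hL⟩ := hR M
    obtain ⟨N, hN⟩ := ih L
    exact ⟨N, L, hL, hN⟩

theorem hasPdLE_iff_hasProjectiveDimensionLE (hR : HasSyzygies R) :
    HasPdLE n M ↔ HasProjectiveDimensionLE (ModuleCat.of Rᵐᵒᵖ M) n := by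
  induction n generalizing M with
  | zero => exact FGMod.proj_iff_hasProjectiveDimensionLE_zero
  | succ n ih =>
    constructor
    · rintro (hproj | ⟨N, hN, h⟩)
      · have := FGMod.proj_iff_hasProjectiveDimensionLE_zero.1 hproj
        exact hasProjectiveDimensionLT_of_ge _ 1 (n + 2) (by lia)
      · exact hN.hasProjectiveDimensionLE_succ_iff.2 (ih.1 h)
    · intro h
      obtain ⟨N, hN⟩ := hR M
      exact Or.inr ⟨N, hN, ih.2 (hN.hasProjectiveDimensionLE_succ_iff.1 h)⟩

theorem hasPdLE_of_isSummand (hR : HasSyzygies R) (hX : X.IsSummand N) (hN : HasPdLE n N) :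
    HasPdLE n X := by
  rw [hR.hasPdLE_iff_hasProjectiveDimensionLE] at hN ⊢
  obtain ⟨r⟩ := hX.nonempty_retract
  exact r.hasProjectiveDimensionLT (n + 1)

theorem hasPdLE_add_iff_of_isSyzygyN (hR : HasSyzygies R) (hN : IsSyzygyN k M N) :
    HasPdLE (n + k) M ↔ HasPdLE n N := by
  simp only [hR.hasPdLE_iff_hasProjectiveDimensionLE]
  induction k generalizing M with
  | zero =>
    obtain ⟨e⟩ := hN
    exact ⟨fun _ => hasProjectiveDimensionLT_of_iso e.toModuleIso (n + 1),
      fun _ => hasProjectiveDimensionLT_of_iso e.symm.toModuleIso (n + 1)⟩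
  | succ k ih =>
    obtain ⟨L, hL, hLN⟩ := hN
    exact hL.hasProjectiveDimensionLE_succ_iff.trans (ih hLN)

theorem finPd_of_isSyzygyN (hR : HasSyzygies R) (hM : FinPd M) (hN : IsSyzygyN k M N) :
    FinPd N :=
  hM.imp fun n h => (hR.hasPdLE_add_iff_of_isSyzygyN hN).1 (h.mono (Nat.le_add_right n k))

theorem pdIT_of_isSyzygyN (hR : HasSyzygies R) (hM : FinPd M) (hN : IsSyzygyN k M N) :
    pdIT N = pdIT M - k :=
  eq_of_forall_ge_iff fun n => by
    rw [(hR.finPd_of_isSyzygyN hM hN).pdIT_le_iff, ← hR.hasPdLE_add_iff_of_isSyzygyN hN,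
      ← hM.pdIT_le_iff, Nat.sub_le_iff_le_add]

theorem pdIT_le_of_isSummand (hR : HasSyzygies R) (hN : FinPd N) (hX : X.IsSummand N) :
    pdIT X ≤ pdIT N :=
  Nat.sInf_le (hR.hasPdLE_of_isSummand hX (hN.pdIT_le_iff.1 le_rfl))

theorem isGreatest_pdIT_isSummand_isSyzygyN (hR : HasSyzygies R) (hM : FinPd M) (k : ℕ) :
    IsGreatest {d | ∃ N X : FGMod R, IsSyzygyN k M N ∧ X.IsSummand N ∧ FinPd X ∧ d = pdIT X}
      (pdIT M - k) := by
  constructor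
  · obtain ⟨N, hN⟩ := hR.exists_isSyzygyN k M
    exact ⟨N, N, hN, N.isSummand_refl, hR.finPd_of_isSyzygyN hM hN,
      (hR.pdIT_of_isSyzygyN hM hN).symm⟩
  · rintro _ ⟨N, X, hN, hX, -, rfl⟩
    rw [← hR.pdIT_of_isSyzygyN hM hN]
    exact hR.pdIT_le_of_isSummand (hR.finPd_of_isSyzygyN hM hN) hX

end HasSyzygies

end ProjectiveDimension

section IgusaTodorov

variable {R} {OmK : AddMonoid.End (ITK R)} {M : FGMod R} {n : ℕ}

theorem FGMod.Proj.ITcls_eq_zero (hM : M.Proj) : ITcls R M = 0 :=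
  (QuotientAddGroup.eq_zero_iff _).2 (AddSubgroup.subset_closure (Or.inr ⟨M, hM, rfl⟩))

theorem IsSyzygyEnd.pow_ITcls_eq_zero (hOm : IsSyzygyEnd R OmK) (hM : HasPdLE n M) :
    (OmK ^ n) (ITcls R M) = 0 := by
  induction n generalizing M with
  | zero => rw [FGMod.Proj.ITcls_eq_zero hM, map_zero]
  | succ n ih =>
    rcases hM with hproj | ⟨N, hN, h⟩
    · rw [hproj.ITcls_eq_zero, map_zero]
    · rw [pow_succ, AddMonoid.End.coe_mul, comp_apply, hOm M N hN, ih h]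

theorem IsSyzygyEnd.map_ITgen_eq_bot (hOm : IsSyzygyEnd R OmK) (hR : HasSyzygies R)
    (hM : HasPdLE n M) :
    (ITgen R M).map ((OmK ^ n : AddMonoid.End (ITK R)) : ITK R →+ ITK R) = ⊥ := by
  refine (AddSubgroup.map_eq_bot_iff _).2 ((AddSubgroup.closure_le _).2 ?_)
  rintro _ ⟨X, hX, -, -, rfl⟩
  exact hOm.pow_ITcls_eq_zero (hR.hasPdLE_of_isSummand hX hM)

theorem IsSyzygyEnd.phiIT_le_pdIT (hOm : IsSyzygyEnd R OmK) (hR : HasSyzygies R)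
    (hM : FinPd M) : phiIT R OmK M ≤ pdIT M := by
  refine Nat.sInf_le fun i hi => ?_
  rw [hOm.map_ITgen_eq_bot hR (hM.pdIT_le_iff.1 hi),
    hOm.map_ITgen_eq_bot hR (hM.pdIT_le_iff.1 le_rfl)]

end IgusaTodorov

theorem psi_eq_pd_of_finPd_general (R : Type u) [Ring R] (hR : HasSyzygies R)
    (OmK : AddMonoid.End (ITK R)) (hOm : IsSyzygyEnd R OmK)
    (M : FGMod R) (hM : FinPd M) :
    psiIT R OmK M = pdIT M := by
  rw [psiIT, (hR.isGreatest_pdIT_isSummand_isSyzygyN hM (phiIT R OmK M)).csSup_eq]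
  exact Nat.add_sub_cancel' (hOm.phiIT_le_pdIT hR hM)

/-- If `M` has finite projective dimension then `ψ(M) = pd M`. -/
theorem psi_eq_pd_of_finPd (R : Type u) [Ring R] [IsArtinianRing Rᵐᵒᵖ]
    (OmK : AddMonoid.End (ITK R)) (hOm : IsSyzygyEnd R OmK)
    (M : FGMod R) (hM : FinPd M) :
    psiIT R OmK M = pdIT M :=
  psi_eq_pd_of_finPd_general R (hasSyzygies_of_isArtinianRing R) OmK hOm M hM
end
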